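/- Fix an integer ℓ ≥ 1, and let w be an odd integer such that 2·w^{2^{ℓ−1}} = p₁ + p₂ for two distinct primes p₁, p₂ ≥ 5. Then the Sylow 2-subgroup of the ideal class group of ℚ(√(−p₁p₂)) is isomorphic to (ℤ/2^aℤ) × (ℤ/2^bℤ) for some integers a ≥ 1 and b ≥ ℓ. -/

import Mathlib

open NumberField

/-- `twoClassGroupIso d G` says: for any realization `K` of the imaginary quadratic field
`ℚ(√-d)` (i.e. a number field generated over `ℚ` by a square root of `-d`), every Sylow
2-subgroup of the ideal class group of its ring of integers (the 2-class group `Cl₂(-d)`)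
is isomorphic to `G`. -/
def twoClassGroupIso (d : ℕ) (G : Type) [Group G] : Prop :=
  ∀ (K : Type) [Field K] [NumberField K] (α : K),
    α ^ 2 = -(d : K) →
    IntermediateField.adjoin ℚ {α} = ⊤ →
    ∀ P : Sylow 2 (ClassGroup (NumberField.RingOfIntegers K)),
      Nonempty ((P : Subgroup (ClassGroup (NumberField.RingOfIntegers K))) ≃* G)

set_option linter.unusedSectionVars false
open scoped nonZeroDivisors

namespace SylTwo

section rep
variable {R : Type*} [CommRing R] [IsDedekindDomain R]

def Rep (x : ClassGroup R) (e : ℤ) : Prop :=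
  ∃ (J : Ideal R) (hJ : J ∈ (Ideal R)⁰), ClassGroup.mk0 ⟨J, hJ⟩ = x ∧ J ^ 2 = Ideal.span {(e : R)}

lemma ideal_sq_inj {I J : Ideal R} (h : I ^ 2 = J ^ 2) : I = J := by
  apply le_antisymm
  · rw [← Ideal.dvd_iff_le]
    exact (UniqueFactorizationMonoid.pow_dvd_pow_iff_dvd (two_ne_zero)).1 (h ▸ dvd_refl _)
  · rw [← Ideal.dvd_iff_le]
    exact (UniqueFactorizationMonoid.pow_dvd_pow_iff_dvd (two_ne_zero)).1 (h ▸ dvd_refl _)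

lemma Rep.unique {x y : ClassGroup R} {e : ℤ} (h : Rep x e) (h' : Rep y e) : x = y := by
  obtain ⟨J, hJ, rfl, h1⟩ := h
  obtain ⟨J', hJ', rfl, h2⟩ := h'
  have : J = J' := ideal_sq_inj (h1.trans h2.symm)
  subst this
  rfl

lemma Rep.mul {x y : ClassGroup R} {e f : ℤ} (h : Rep x e) (h' : Rep y f) : Rep (x * y) (e * f) := by
  obtain ⟨J, hJ, rfl, h1⟩ := h
  obtain ⟨J', hJ', rfl, h2⟩ := h'
  refine ⟨J * J', mul_mem hJ hJ', ?_, ?_⟩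
  · rw [← map_mul]; rfl
  · rw [mul_pow, h1, h2, Ideal.span_singleton_mul_span_singleton]; push_cast; rfl

lemma Rep.one : Rep (1 : ClassGroup R) 1 := by
  refine ⟨1, one_mem _, ?_, ?_⟩
  · exact map_one _
  · simp

lemma Rep.sq_eq_one {x : ClassGroup R} {e : ℤ} (h : Rep x e) : x ^ 2 = 1 := by
  obtain ⟨J, hJ, rfl, h1⟩ := h
  rw [← map_pow]
  refine (ClassGroup.mk0_eq_one_iff (pow_mem hJ 2)).2 ?_
  rw [h1]
  exact ⟨⟨_, rfl⟩⟩

lemma mk0_span_mul {a : R} (ha : a ≠ 0) {J J' : Ideal R} (hJ : J ∈ (Ideal R)⁰)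
    (hJ' : J' ∈ (Ideal R)⁰)
    (h : J = Ideal.span {a} * J') : ClassGroup.mk0 ⟨J, hJ⟩ = ClassGroup.mk0 ⟨J', hJ'⟩ := by
  rw [ClassGroup.mk0_eq_mk0_iff]
  refine ⟨1, a, one_ne_zero, ha, ?_⟩
  simp [h]

lemma Rep.of_mul_sq [CharZero R] {x : ClassGroup R} {e f : ℤ} (hf : f ≠ 0) (h : Rep x (e * f ^ 2)) : Rep x e := by
  obtain ⟨J, hJ, rfl, h1⟩ := h
  have hf' : (f : R) ≠ 0 := by exact_mod_cast hf
  have hfs : Ideal.span {(f:R)} ≠ 0 := by simpa using hf'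
  have h2 : (Ideal.span {(f:R)}) ^ 2 ∣ J ^ 2 := by
    rw [h1]
    refine ⟨Ideal.span {(e:R)}, ?_⟩
    rw [Ideal.span_singleton_pow, Ideal.span_singleton_mul_span_singleton]; push_cast
    rw [mul_comm]
  obtain ⟨J', hJ'⟩ := (UniqueFactorizationMonoid.pow_dvd_pow_iff_dvd (two_ne_zero)).1 h2
  have hJ0 : J' ∈ (Ideal R)⁰ := by
    rw [mem_nonZeroDivisors_iff_ne_zero] at hJ ⊢
    rintro rfl
    simp at hJ'
    exact hJ hJ'
  refine ⟨J', hJ0, (mk0_span_mul hf' hJ hJ0 hJ').symm, ?_⟩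
  have : (Ideal.span {(f:R)}) ^ 2 * J' ^ 2 = (Ideal.span {(f:R)}) ^ 2 * Ideal.span {(e : R)} := by
    rw [← mul_pow, ← hJ', h1, Ideal.span_singleton_pow, Ideal.span_singleton_mul_span_singleton]
    push_cast
    rw [mul_comm]
  exact mul_left_cancel₀ (pow_ne_zero 2 hfs) this

lemma Rep.natAbs {x : ClassGroup R} {e : ℤ} (h : Rep x e) : Rep x (e.natAbs : ℤ) := by
  obtain ⟨J, hJ, rfl, h1⟩ := h
  refine ⟨J, hJ, rfl, ?_⟩
  rw [h1]
  rcases Int.natAbs_eq e with h | h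
  · rw [← h]
  · rw [Ideal.span_singleton_eq_span_singleton]
    conv_lhs => rw [h]
    push_cast
    exact Associated.neg_left (Associated.refl _)

lemma Rep.mul_d {x : ClassGroup R} {e d : ℤ} (s : R) (hs : s ^ 2 = -(d : R)) (hs0 : s ≠ 0)
    (h : Rep x e) : Rep x (e * d) := by
  have : Rep (1 : ClassGroup R) d := by
    have h0 : Ideal.span {s} ∈ (Ideal R)⁰ := by
      rw [mem_nonZeroDivisors_iff_ne_zero]; simpa using hs0
    refine ⟨Ideal.span {s}, h0, ?_, ?_⟩
    · exact (ClassGroup.mk0_eq_one_iff h0).2 ⟨⟨_, rfl⟩⟩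
    · rw [Ideal.span_singleton_pow, hs, Ideal.span_singleton_neg]
  simpa using h.mul this

end rep

section quad
variable {R : Type*} [CommRing R] [IsDedekindDomain R] [Module.Free ℤ R] [CharZero R]
  {d : ℤ} {s : R}

lemma Rep.norm_of_one (hrep : ∀ x : R, ∃ u v : ℤ, x = u + v * s)
    (hA : ∀ u v : ℤ, (Ideal.absNorm (Ideal.span {(u + v * s : R)}) : ℤ) = u ^ 2 + d * v ^ 2)
    (hd : 0 < d)
    {e : ℤ} (he : 0 < e) (h : Rep (1 : ClassGroup R) e) : ∃ u v : ℤ, u ^ 2 + d * v ^ 2 = e := by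
  obtain ⟨J, hJ, h0, h1⟩ := h
  obtain ⟨⟨y, hy⟩⟩ := (ClassGroup.mk0_eq_one_iff hJ).1 h0
  obtain ⟨u, v, rfl⟩ := hrep y
  refine ⟨u, v, ?_⟩
  have hy' : J = Ideal.span {(u + v * s : R)} := hy
  have h2 := congrArg (fun I => (Ideal.absNorm I : ℤ)) h1
  have h3 := hA e 0
  simp only [Int.cast_zero, zero_mul, add_zero] at h3
  simp only [map_pow, h3] at h2
  rw [hy'] at h2
  push_cast at h2
  rw [hA] at h2
  have : 0 ≤ u ^ 2 + d * v ^ 2 := by positivity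
  nlinarith

lemma ext_quad (hA : ∀ u v : ℤ, (Ideal.absNorm (Ideal.span {(u + v * s : R)}) : ℤ) = u ^ 2 + d * v ^ 2)
    (hd : 0 < d) {u v u' v' : ℤ} (h : (u + v * s : R) = u' + v' * s) : u = u' ∧ v = v' := by
  have := hA (u - u') (v - v')
  have h0 : (((u - u' : ℤ) : R) + ((v - v' : ℤ) : R) * s) = 0 := by
    push_cast
    linear_combination h
  rw [h0] at this
  simp at this
  have h1 : (u - u') ^ 2 = 0 := by nlinarith [sq_nonneg (u - u'), mul_nonneg hd.le (sq_nonneg (v - v'))]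
  have h2 : d * (v - v') ^ 2 = 0 := by nlinarith [sq_nonneg (u - u'), mul_nonneg hd.le (sq_nonneg (v - v'))]
  have h3 : (v - v') ^ 2 = 0 := by simpa [hd.ne'] using h2
  have h4 := pow_eq_zero_iff (two_ne_zero) |>.1 h1
  have h5 := pow_eq_zero_iff (two_ne_zero) |>.1 h3
  omega

lemma Rep.exists_of_sq (hs : s ^ 2 = -(d : R)) (hrep : ∀ x : R, ∃ u v : ℤ, x = u + v * s)
    (hA : ∀ u v : ℤ, (Ideal.absNorm (Ideal.span {(u + v * s : R)}) : ℤ) = u ^ 2 + d * v ^ 2)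
    (x : ClassGroup R) (hx : x ^ 2 = 1) : ∃ c : ℤ, c ≠ 0 ∧ Rep x c := by
  obtain ⟨⟨I, hI⟩, rfl⟩ := ClassGroup.mk0_surjective x
  have hI0 : I ≠ 0 := mem_nonZeroDivisors_iff_ne_zero.1 hI
  rw [← map_pow] at hx
  obtain ⟨⟨β, hβ⟩⟩ := (ClassGroup.mk0_eq_one_iff (pow_mem hI 2)).1 hx
  have hβ : I ^ 2 = Ideal.span {β} := hβ
  have hβ0 : β ≠ 0 := by
    rintro rfl
    simp at hβ
    exact hI0 (pow_eq_zero_iff two_ne_zero |>.1 hβ)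
  obtain ⟨u, v, huv⟩ := hrep β
  obtain ⟨m, hm⟩ : ∃ m : ℤ, m = (Ideal.absNorm I : ℤ) := ⟨_, rfl⟩
  have hm2 : m ^ 2 = u ^ 2 + d * v ^ 2 := by
    rw [← hA, ← huv, ← hβ, map_pow, hm]; push_cast; rfl
  by_cases hγ : β + m = 0
  · refine ⟨m, ?_, I, hI, rfl, ?_⟩
    · rintro rfl
      simp at hγ; exact hβ0 hγ
    · rw [hβ, eq_neg_of_add_eq_zero_left hγ, Ideal.span_singleton_neg]
  · have hkey : (β + m) ^ 2 = β * ((2 * (u + m) : ℤ) : R) := by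
      have hm2' : (m : R) ^ 2 = u ^ 2 + d * v ^ 2 := by exact_mod_cast hm2
      push_cast
      rw [huv]
      linear_combination (1 : R) * hm2' + (v:R) ^ 2 * hs
    have hc : (2 * (u + m) : ℤ) ≠ 0 := by
      intro h
      rw [h] at hkey
      simp at hkey
      exact hγ hkey
    have hid : Ideal.span {β + m} ^ 2 = I ^ 2 * Ideal.span {((2 * (u + m) : ℤ) : R)} := by
      rw [hβ, Ideal.span_singleton_pow, Ideal.span_singleton_mul_span_singleton, hkey]
    obtain ⟨J, hJ⟩ := (UniqueFactorizationMonoid.pow_dvd_pow_iff_dvd (two_ne_zero)).1 (Dvd.intro _ hid.symm)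
    have hJ0 : J ∈ (Ideal R)⁰ := by
      rw [mem_nonZeroDivisors_iff_ne_zero]
      rintro rfl
      simp at hJ
      exact hγ hJ
    refine ⟨_, hc, J, hJ0, ?_, ?_⟩
    · have h1 : ClassGroup.mk0 (⟨I, hI⟩ : (Ideal R)⁰) * ClassGroup.mk0 ⟨J, hJ0⟩ = 1 := by
        rw [← map_mul]
        refine (ClassGroup.mk0_eq_one_iff (mul_mem hI hJ0)).2 ?_
        rw [← hJ]
        exact ⟨⟨_, rfl⟩⟩
      rw [map_pow, sq] at hx
      exact mul_left_cancel (h1.trans hx.symm)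
    · rw [hJ, mul_pow] at hid
      exact mul_left_cancel₀ (pow_ne_zero 2 hI0) hid

lemma Rep.dvd_of_squarefree (hs : s ^ 2 = -(d : R)) (hrep : ∀ x : R, ∃ u v : ℤ, x = u + v * s)
    (hA : ∀ u v : ℤ, (Ideal.absNorm (Ideal.span {(u + v * s : R)}) : ℤ) = u ^ 2 + d * v ^ 2)
    (hd : 0 < d) {x : ClassGroup R} {e : ℕ} (he : Squarefree e) (h : Rep x e) :
    (e : ℤ) ∣ 2 * d := by
  obtain ⟨J, hJ, h0, h1⟩ := h
  have hprime : ∀ p : ℕ, p.Prime → p ∣ e → (p : ℤ) ∣ 2 * d := by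
    intro p hp hpe
    by_contra hpd
    have hpZ : Prime (p : ℤ) := Nat.prime_iff_prime_int.1 hp
    have hdivco : ∀ u v : ℤ, ((p : ℤ) : R) ∣ u + v * s → (p : ℤ) ∣ u ∧ (p : ℤ) ∣ v := by
      rintro u v ⟨y, hy⟩
      obtain ⟨a, b, rfl⟩ := hrep y
      have : (u + v * s : R) = ((p * a : ℤ) : R) + ((p * b : ℤ) : R) * s := by
        rw [hy]; push_cast; ring
      obtain ⟨h1, h2⟩ := ext_quad hA hd this
      exact ⟨⟨_, h1⟩, ⟨_, h2⟩⟩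
    have hle : J ≤ Ideal.span {((p : ℤ) : R)} := by
      intro x hx
      rw [Ideal.mem_span_singleton]
      have hx2 : x ^ 2 ∈ J ^ 2 := Ideal.pow_mem_pow hx 2
      rw [h1, Ideal.mem_span_singleton] at hx2
      obtain ⟨u, v, rfl⟩ := hrep x
      have h3 : ((p : ℤ) : R) ∣ (u + v * s) ^ 2 := by
        refine dvd_trans ?_ hx2
        exact _root_.map_dvd (Int.castRingHom R) (Int.natCast_dvd_natCast.2 hpe)
      have h4 : ((u + v * s : R)) ^ 2 = ((u ^ 2 - d * v ^ 2 : ℤ) : R) + ((2 * u * v : ℤ) : R) * s := by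
        push_cast
        linear_combination (v : R) ^ 2 * hs
      rw [h4] at h3
      obtain ⟨h5, h6⟩ := hdivco _ _ h3
      have hp2 : ¬ (p : ℤ) ∣ 2 := fun h => hpd (h.mul_right _)
      have hpd' : ¬ (p : ℤ) ∣ d := fun h => hpd (h.mul_left _)
      have hu : (p : ℤ) ∣ u ∧ (p : ℤ) ∣ v := by
        rcases hpZ.dvd_or_dvd h6 with h | h
        · have hu := (hpZ.dvd_or_dvd h).resolve_left hp2
          refine ⟨hu, ?_⟩
          have : (p : ℤ) ∣ d * v ^ 2 := by
            have := dvd_sub (hu.mul_right u) h5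
            ring_nf at this ⊢
            exact this
          exact hpZ.dvd_of_dvd_pow ((hpZ.dvd_or_dvd this).resolve_left hpd')
        · refine ⟨?_, h⟩
          have : (p : ℤ) ∣ u ^ 2 := by
            have := dvd_add h5 (h.mul_right (d * v))
            ring_nf at this ⊢
            exact this
          exact hpZ.dvd_of_dvd_pow this
      obtain ⟨⟨a, rfl⟩, ⟨b, rfl⟩⟩ := hu
      exact ⟨a + b * s, by push_cast; ring⟩
    rw [← Ideal.dvd_iff_le] at hle
    have h7 := pow_dvd_pow_of_dvd hle 2
    rw [h1, Ideal.span_singleton_pow, Ideal.dvd_iff_le, Ideal.span_singleton_le_span_singleton] at h7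
    obtain ⟨y, hy⟩ := h7
    obtain ⟨a, b, rfl⟩ := hrep y
    have : (((e : ℤ) : R) + ((0 : ℤ) : R) * s : R) = ((p ^ 2 * a : ℤ) : R) + ((p ^ 2 * b : ℤ) : R) * s := by
      rw [hy]; push_cast; ring
    have h8 : ((p ^ 2 : ℕ) : ℤ) ∣ (e : ℤ) := ⟨a, by rw [(ext_quad hA hd this).1]; push_cast; rfl⟩
    have h9 := Int.natCast_dvd_natCast.1 h8
    rw [sq] at h9
    exact hp.one_lt.ne' (Nat.isUnit_iff.1 (he p h9))
  have hd' : ((2 * d).natAbs : ℤ) = 2 * d := Int.natAbs_of_nonneg (by positivity)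
  rw [← hd']
  rw [Int.natCast_dvd_natCast]
  rw [← Nat.prod_primeFactors_of_squarefree he]
  refine dvd_trans (Finset.prod_dvd_prod_of_subset _ _ _ ?_) (Nat.prod_primeFactors_dvd _)
  intro p hp
  rw [Nat.mem_primeFactors] at hp ⊢
  refine ⟨hp.1, ?_, by simp; positivity⟩
  have := hprime p hp.1 hp.2.1
  rw [← hd'] at this
  exact Int.natCast_dvd_natCast.1 this

end quad

section quad2
variable {R : Type*} [CommRing R] [IsDedekindDomain R] [Module.Free ℤ R] [CharZero R]
  {p q : ℕ} {s : R}

lemma span_mem_nzd {J : Ideal R} {e : ℤ} (he : e ≠ 0) (h : J ^ 2 = Ideal.span {(e : R)}) :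
    J ∈ (Ideal R)⁰ := by
  rw [mem_nonZeroDivisors_iff_ne_zero]
  rintro rfl
  have h' := h.symm
  simp at h'
  exact he h'

lemma rep_two {d : ℤ} (hs : s ^ 2 = -(d : R)) (hd : d % 4 = 1) : ∃ x : ClassGroup R, Rep x 2 := by
  obtain ⟨k, hk⟩ : ∃ k : ℤ, d = 4 * k + 1 := ⟨d / 4, by omega⟩
  have hs' : s ^ 2 = -(4 * k + 1) := by rw [hs, hk]; push_cast; ring
  have h : (Ideal.span {(2 : R), 1 + s}) ^ 2 = Ideal.span {((2 : ℤ) : R)} := by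
    rw [sq, Ideal.span_pair_mul_span_pair]
    apply le_antisymm
    · rw [Ideal.span_le]
      intro x hx
      simp only [Set.mem_insert_iff, Set.mem_singleton_iff] at hx
      rw [SetLike.mem_coe, Ideal.mem_span_singleton]
      push_cast
      rcases hx with rfl | rfl | rfl | rfl
      · exact Dvd.intro _ rfl
      · exact Dvd.intro _ rfl
      · exact Dvd.intro_left _ rfl
      · exact ⟨s - 2 * k, by linear_combination hs'⟩
    · rw [Ideal.span_singleton_le_iff_mem]
      have e : ((2 : ℤ) : R) = (2 * (1 + s)) - (1 + s) * (1 + s) - k * (2 * 2) := by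
        push_cast
        linear_combination hs'
      rw [e]
      refine sub_mem (sub_mem ?_ ?_) (Ideal.mul_mem_left _ _ ?_) <;> apply Ideal.subset_span <;> simp
  exact ⟨_, _, span_mem_nzd two_ne_zero h, rfl, h⟩

lemma rep_p (hp : p.Prime) (hq : q.Prime) (hne : p ≠ q) (hs : s ^ 2 = -((p * q : ℤ) : R)) :
    ∃ x : ClassGroup R, Rep x p := by
  have hs' : s ^ 2 = -(p * q : R) := by rw [hs]; push_cast; ring
  have hc : IsCoprime (p : ℤ) (q : ℤ) := by
    rw [Nat.isCoprime_iff_coprime]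
    exact (Nat.coprime_primes hp hq).2 hne
  obtain ⟨a, b, hab⟩ := hc
  have hab' : (a : R) * p + b * q = 1 := by exact_mod_cast congrArg (Int.cast : ℤ → R) hab
  have h : (Ideal.span {(p : R), s}) ^ 2 = Ideal.span {((p : ℤ) : R)} := by
    rw [sq, Ideal.span_pair_mul_span_pair]
    apply le_antisymm
    · rw [Ideal.span_le]
      intro x hx
      simp only [Set.mem_insert_iff, Set.mem_singleton_iff] at hx
      rw [SetLike.mem_coe, Ideal.mem_span_singleton]
      push_cast
      rcases hx with rfl | rfl | rfl | rfl
      · exact Dvd.intro _ rfl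
      · exact Dvd.intro _ rfl
      · exact Dvd.intro_left _ rfl
      · exact ⟨- q, by linear_combination hs'⟩
    · rw [Ideal.span_singleton_le_iff_mem]
      have e : ((p : ℤ) : R) = a * (p * p) - b * (s * s) := by
        push_cast
        linear_combination (-p : R) * hab' + b * hs'
      rw [e]
      refine sub_mem (Ideal.mul_mem_left _ _ ?_) (Ideal.mul_mem_left _ _ ?_) <;>
        apply Ideal.subset_span <;> simp
  exact ⟨_, _, span_mem_nzd (by exact_mod_cast hp.ne_zero) h, rfl, h⟩

lemma norm_small {p q : ℕ} {e u v : ℤ} (h : u ^ 2 + (p * q : ℤ) * v ^ 2 = e) (he : e < p * q) :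
    v = 0 ∧ u ^ 2 = e := by
  have hv : v = 0 := by
    by_contra hv
    have : 0 < v ^ 2 := by positivity
    have h2 : (0 : ℤ) ≤ p * q := by positivity
    nlinarith [sq_nonneg u]
  subst hv
  exact ⟨rfl, by linarith⟩

lemma two_torsion (hp : p.Prime) (hq : q.Prime) (hne : p ≠ q) (h5q : 5 ≤ q) (h5p : 5 ≤ p)
    (h4 : (p * q : ℤ) % 4 = 1)
    (hs : s ^ 2 = -((p * q : ℤ) : R)) (hrep : ∀ x : R, ∃ u v : ℤ, x = u + v * s)
    (hA : ∀ u v : ℤ, (Ideal.absNorm (Ideal.span {(u + v * s : R)}) : ℤ)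
      = u ^ 2 + (p * q : ℤ) * v ^ 2) :
    ∃ a b : ClassGroup R, a ^ 2 = 1 ∧ b ^ 2 = 1 ∧ a ≠ 1 ∧ b ≠ 1 ∧ a * b ≠ 1 ∧
      ∀ x : ClassGroup R, x ^ 2 = 1 → x = 1 ∨ x = a ∨ x = b ∨ x = a * b := by
  obtain ⟨a, ha⟩ := rep_two (R := R) hs h4
  obtain ⟨b, hb⟩ := rep_p (R := R) hp hq hne hs
  have hab := ha.mul hb
  have hp0 : (p : ℤ) ≠ 0 := by exact_mod_cast hp.ne_zero
  have hq0 : (q : ℤ) ≠ 0 := by exact_mod_cast hq.ne_zero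
  have hd : (0 : ℤ) < p * q := by positivity
  have hs0 : s ≠ 0 := by
    rintro rfl
    have : ((p * q : ℤ) : R) ≠ 0 := by exact_mod_cast hd.ne'
    simp at hs
    rcases hs with h | h
    · exact hp.ne_zero h
    · exact hq.ne_zero h
  have h5p' : (5 : ℤ) ≤ p := by exact_mod_cast h5p
  have h5q' : (5 : ℤ) ≤ q := by exact_mod_cast h5q
  have key : ∀ e : ℕ, Squarefree e → 1 < e → (e : ℤ) < p * q → ¬ Rep (1 : ClassGroup R) e := by
    intro e he he1 he2 h
    obtain ⟨u, v, huv⟩ := Rep.norm_of_one hrep hA hd (by exact_mod_cast (by omega : 0 < e)) h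
    obtain ⟨-, hu⟩ := norm_small huv he2
    have h2 : u.natAbs ^ 2 = e := by
      have : ((u.natAbs ^ 2 : ℕ) : ℤ) = e := by push_cast; rw [sq_abs, hu]
      exact_mod_cast this
    have h3 := he u.natAbs ⟨1, by rw [← h2]; ring⟩
    rw [Nat.isUnit_iff] at h3
    rw [h3] at h2
    omega
  have hodd : p ≠ 2 := by omega
  refine ⟨a, b, ha.sq_eq_one, hb.sq_eq_one, ?_, ?_, ?_, ?_⟩
  · rintro rfl
    exact key 2 Nat.prime_two.prime.squarefree (by norm_num) (by push_cast; nlinarith) (by exact_mod_cast ha)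
  · rintro rfl
    exact key p hp.prime.squarefree hp.one_lt (by nlinarith) hb
  · intro h
    rw [h] at hab
    refine key (2 * p) ?_ (by omega) (by push_cast; nlinarith) (by exact_mod_cast hab)
    rw [Nat.squarefree_mul ((Nat.coprime_primes Nat.prime_two hp).2 hodd.symm)]
    exact ⟨Nat.prime_two.prime.squarefree, hp.prime.squarefree⟩
  · intro x hx
    obtain ⟨c, hc0, hc⟩ := Rep.exists_of_sq hs hrep hA x hx
    replace hc := hc.natAbs
    obtain ⟨e, f, hef, he⟩ := Nat.sq_mul_squarefree c.natAbs
    have hf0 : f ≠ 0 := by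
      rintro rfl
      simp at hef
      exact hc0 (Int.natAbs_eq_zero.1 hef.symm)
    have hxe : Rep x e := by
      apply Rep.of_mul_sq (f := f) (by exact_mod_cast hf0)
      rw [← hef] at hc
      push_cast at hc
      rwa [mul_comm]
    have hdiv := Rep.dvd_of_squarefree hs hrep hA hd he hxe
    have hdiv' : e ∣ 2 * (p * q) := by exact_mod_cast hdiv
    obtain ⟨e1, e2, h1, h2, rfl⟩ := (Nat.dvd_mul).1 hdiv'
    obtain ⟨e3, e4, h3, h4, rfl⟩ := (Nat.dvd_mul).1 h2
    rw [Nat.dvd_prime Nat.prime_two] at h1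
    rw [Nat.dvd_prime hp] at h3
    rw [Nat.dvd_prime hq] at h4
    have r1 := Rep.one (R := R)
    have hmd := hxe.mul_d s hs hs0
    push_cast at hxe hmd
    rcases h4 with rfl | rfl
    · rcases h1 with rfl | rfl <;> rcases h3 with rfl | rfl
      · left; exact Rep.unique (by simpa using hxe) r1
      · right; right; left; exact Rep.unique (by simpa using hxe) hb
      · right; left; exact Rep.unique (by simpa using hxe) ha
      · right; right; right; exact Rep.unique (by simpa using hxe) hab
    · rcases h1 with rfl | rfl <;> rcases h3 with rfl | rfl
      · right; right; left
        refine Rep.unique (Rep.of_mul_sq hq0 ?_) hb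
        convert hmd using 1; push_cast; ring
      · left
        refine Rep.unique (Rep.of_mul_sq (mul_ne_zero hp0 hq0) ?_) r1
        convert hmd using 1; push_cast; ring
      · right; right; right
        refine Rep.unique (Rep.of_mul_sq hq0 ?_) hab
        convert hmd using 1; push_cast; ring
      · right; left
        refine Rep.unique (Rep.of_mul_sq (mul_ne_zero hp0 hq0) ?_) ha
        convert hmd using 1; push_cast; ring

lemma exists_order (hp : p.Prime) (hq : q.Prime) (hne : p ≠ q) (h5q : 5 ≤ q) (h5p : 5 ≤ p)
    (hs : s ^ 2 = -((p * q : ℤ) : R)) (hrep : ∀ x : R, ∃ u v : ℤ, x = u + v * s)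
    (hA : ∀ u v : ℤ, (Ideal.absNorm (Ideal.span {(u + v * s : R)}) : ℤ)
      = u ^ 2 + (p * q : ℤ) * v ^ 2) (k : ℕ) (w : ℤ) (hw : Odd w)
    (hsum : (p : ℤ) + q = 2 * w ^ 2 ^ k) : ∃ g : ClassGroup R, orderOf g = 2 ^ (k + 1) := by
  have h5p' : (5 : ℤ) ≤ p := by exact_mod_cast h5p
  have h5q' : (5 : ℤ) ≤ q := by exact_mod_cast h5q
  have hd : (0 : ℤ) < p * q := by positivity
  obtain ⟨W, hW⟩ : ∃ W : ℤ, W = w ^ 2 ^ k := ⟨_, rfl⟩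
  have hWodd : Odd W := hW ▸ hw.pow
  rw [← hW] at hsum
  have hW2 : w ^ 2 ^ (k + 1) = W ^ 2 := by rw [hW, ← pow_mul, pow_succ]
  have hcop : IsCoprime (W ^ 2) (2 * (W - q)) := by
    apply IsCoprime.pow_left
    apply IsCoprime.mul_right
    · obtain ⟨m, hm⟩ := hWodd
      exact ⟨1, -m, by rw [hm]; ring⟩
    · have : IsCoprime W (q : ℤ) := by
        rw [isCoprime_comm]
        refine (Nat.prime_iff_prime_int.1 hq).coprime_iff_not_dvd.2 ?_
        intro h
        have h2 : (q : ℤ) ∣ p := by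
          have : (p : ℤ) = 2 * W - q := by linarith
          rw [this]
          exact dvd_sub (h.mul_left _) dvd_rfl
        exact hne ((Nat.prime_dvd_prime_iff_eq hq hp).1 (Int.natCast_dvd_natCast.1 h2)).symm
      obtain ⟨a, b, hab⟩ := this
      exact ⟨a + b, -b, by linear_combination hab⟩
  obtain ⟨a, b, hab⟩ := hcop
  have hab' : (a : R) * W ^ 2 + b * (2 * (W - q)) = 1 := by
    exact_mod_cast congrArg (Int.cast : ℤ → R) hab
  obtain ⟨β, hβ⟩ : ∃ β : R, β = ((W - q : ℤ) : R) + ((1 : ℤ) : R) * s := ⟨_, rfl⟩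
  obtain ⟨β', hβ'⟩ : ∃ β : R, β = ((W - q : ℤ) : R) - s := ⟨_, rfl⟩
  have hsumR : (p : R) + q = 2 * W := by exact_mod_cast congrArg (Int.cast : ℤ → R) hsum
  have hmul : β * β' = (W : R) ^ 2 := by
    rw [hβ, hβ']
    push_cast at hs ⊢
    linear_combination (q : R) * hsumR - hs
  have hcop' : IsCoprime (Ideal.span {β}) (Ideal.span {β'}) := by
    rw [Ideal.isCoprime_span_singleton_iff]
    refine ⟨a * β' + b, b, ?_⟩
    rw [← hab', ← hmul, hβ, hβ']
    push_cast
    ring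
  obtain ⟨A, hAA⟩ := exists_eq_pow_of_mul_eq_pow_of_coprime (n := 2 ^ (k + 1))
    (c := Ideal.span {(w : R)}) hcop' (by
      rw [Ideal.span_singleton_mul_span_singleton, hmul, Ideal.span_singleton_pow]
      congr 2
      exact_mod_cast congrArg (Int.cast : ℤ → R) hW2.symm)
  have hNβ := hA (W - q) 1
  rw [← hβ] at hNβ
  have hN2 : (W - q) ^ 2 + (p * q : ℤ) * 1 ^ 2 = W ^ 2 := by
    linear_combination (q : ℤ) * hsum
  rw [hN2] at hNβ
  have hW5 : 5 ≤ W := by linarith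
  have hWlt : W < p * q := by nlinarith
  have hA0 : A ∈ (Ideal R)⁰ := by
    rw [mem_nonZeroDivisors_iff_ne_zero]
    rintro rfl
    rw [hAA, zero_pow (by positivity)] at hNβ
    simp at hNβ
    exact absurd hNβ.symm (by positivity)
  refine ⟨ClassGroup.mk0 ⟨A, hA0⟩, ?_⟩
  apply orderOf_eq_prime_pow
  · rw [← map_pow]
    intro h
    obtain ⟨⟨y, hy⟩⟩ := (ClassGroup.mk0_eq_one_iff (pow_mem hA0 _)).1 h
    have hy : A ^ 2 ^ k = Ideal.span {y} := hy
    have hy2 : Ideal.span {y} ^ 2 = Ideal.span {β} := by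
      rw [hAA, ← hy, ← pow_mul, pow_succ]
    obtain ⟨u, v, huv⟩ := hrep y
    have h1 := congrArg (fun I => (Ideal.absNorm I : ℤ)) hy2
    simp only [map_pow, hNβ] at h1
    push_cast at h1
    have h2 := hA u v
    rw [← huv] at h2
    have h3 : (Ideal.absNorm (Ideal.span {y}) : ℤ) = W := by
      have : (0 : ℤ) ≤ (Ideal.absNorm (Ideal.span {y}) : ℤ) := by positivity
      nlinarith
    rw [h3] at h2
    obtain ⟨rfl, hu⟩ := norm_small h2.symm hWlt
    have h4 : y ^ 2 ∣ β := by
      rw [Ideal.span_singleton_pow] at hy2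
      exact (Ideal.span_singleton_eq_span_singleton.1 hy2).dvd
    obtain ⟨z, hz⟩ := h4
    obtain ⟨c, e, rfl⟩ := hrep z
    have h5 : ((W - q : ℤ) : R) + ((1 : ℤ) : R) * s = ((W * c : ℤ) : R) + ((W * e : ℤ) : R) * s := by
      rw [← hβ, hz, huv, ← hu]; push_cast; ring
    have h6 := (ext_quad hA hd h5).2
    have h7 : W ∣ 1 := ⟨e, h6⟩
    have := Int.le_of_dvd one_pos h7
    omega
  · rw [← map_pow]
    refine (ClassGroup.mk0_eq_one_iff (pow_mem hA0 _)).2 ?_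
    rw [← hAA]
    exact ⟨⟨_, rfl⟩⟩
end quad2

section grp

lemma pgroup_struct (P : Type*) [CommGroup P] [Finite P] (hP : IsPGroup 2 P)
    (hcard : Nat.card {x : P // x ^ 2 = 1} = 4) (g : P) (ℓ : ℕ) (hg : orderOf g = 2 ^ ℓ) :
    ∃ a b : ℕ, 1 ≤ a ∧ ℓ ≤ b ∧ Nonempty (P ≃* Multiplicative (ZMod (2 ^ a) × ZMod (2 ^ b))) := by
  classical
  obtain ⟨ι, _, n, hn, ⟨f⟩⟩ := CommGroup.equiv_prod_multiplicative_zmod_of_finite P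
  have hn2 : ∀ i, ∃ e : ℕ, n i = 2 ^ e := by
    intro i
    obtain ⟨m, hm⟩ := hP (f.symm (Pi.mulSingle i (Multiplicative.ofAdd (1 : ZMod (n i)))))
    rw [← map_pow, MulEquiv.map_eq_one_iff] at hm
    have h1 := congrFun hm i
    simp only [Pi.pow_apply, Pi.mulSingle_eq_same, Pi.one_apply] at h1
    rw [← ofAdd_nsmul, ofAdd_eq_one, nsmul_one, ZMod.natCast_eq_zero_iff] at h1
    obtain ⟨e, -, he⟩ := (Nat.dvd_prime_pow Nat.prime_two).1 h1
    exact ⟨e, he⟩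
  choose e he using hn2
  obtain rfl : n = fun i => 2 ^ e i := funext he
  have he1 : ∀ i, 1 ≤ e i := by
    intro i
    by_contra h
    have h0 : e i = 0 := by omega
    have := hn i
    simp [h0] at this
  have hker : ∀ i, Nat.card {z : Multiplicative (ZMod (2 ^ e i)) // z ^ 2 = 1} = 2 := by
    intro i
    have : NeZero (2 ^ e i) := ⟨by positivity⟩
    have h1 := IsCyclic.card_powMonoidHom_ker (G := Multiplicative (ZMod (2 ^ e i))) 2
    have h2 : Nat.card (Multiplicative (ZMod (2 ^ e i))) = 2 ^ e i := by
      rw [Nat.card_congr Multiplicative.toAdd]; simp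
    rw [h2, Nat.gcd_eq_right (dvd_pow_self 2 (by have := he1 i; omega))] at h1
    exact h1
  have hpi : Nat.card {x : P // x ^ 2 = 1} =
      Nat.card (∀ i, {z : Multiplicative (ZMod (2 ^ e i)) // z ^ 2 = 1}) := by
    refine Nat.card_congr ?_
    refine (Equiv.subtypeEquiv f.toEquiv (q := fun x => ∀ i, (x i) ^ 2 = 1) ?_).trans
      (Equiv.subtypePiEquivPi (p := fun i (z : Multiplicative (ZMod (2 ^ e i))) => z ^ 2 = 1))
    intro a
    rw [← f.map_eq_one_iff, map_pow, funext_iff]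
    rfl
  rw [hcard, Nat.card_pi] at hpi
  simp only [hker, Finset.prod_const, Finset.card_univ] at hpi
  have hι : Nat.card ι = 2 := by
    rw [Nat.card_eq_fintype_card]
    have : 2 ^ Fintype.card ι = 2 ^ 2 := by omega
    exact Nat.pow_right_injective le_rfl this
  have main : ∀ x y : ι, x ≠ y → (∀ i, i = x ∨ i = y) → e x ≤ e y →
      ∃ a b : ℕ, 1 ≤ a ∧ ℓ ≤ b ∧ Nonempty (P ≃* Multiplicative (ZMod (2 ^ a) × ZMod (2 ^ b))) := by
    intro x y hxy hall hle
    refine ⟨e x, e y, he1 x, ?_, ?_⟩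
    · have hpow : g ^ 2 ^ e y = 1 := by
        rw [← f.map_eq_one_iff, map_pow]
        funext i
        have hi : e i ≤ e y := by
          rcases hall i with rfl | rfl
          · exact hle
          · exact le_rfl
        simp only [Pi.pow_apply, Pi.one_apply]
        obtain ⟨c, hc⟩ := pow_dvd_pow 2 hi
        rw [← toAdd_eq_zero, toAdd_pow, nsmul_eq_mul, (ZMod.natCast_eq_zero_iff _ _).2 ⟨c, hc⟩, zero_mul]
      have := orderOf_dvd_of_pow_eq_one hpow
      rw [hg] at this
      exact (Nat.pow_dvd_pow_iff_le_right (by norm_num)).1 this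
    · let φ : (∀ i, Multiplicative (ZMod (2 ^ e i))) →*
          Multiplicative (ZMod (2 ^ e x)) × Multiplicative (ZMod (2 ^ e y)) :=
        MonoidHom.prod (Pi.evalMonoidHom _ x) (Pi.evalMonoidHom _ y)
      have hφ : Function.Bijective φ := by
        constructor
        · intro a b hab
          have h1 : a x = b x := congrArg Prod.fst hab
          have h2 : a y = b y := congrArg Prod.snd hab
          funext i
          rcases hall i with rfl | rfl
          · exact h1
          · exact h2
        · rintro ⟨a, b⟩
          refine ⟨Function.update (Function.update 1 x a) y b, ?_⟩
          simp [φ, hxy]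
      exact ⟨f.trans ((MulEquiv.ofBijective φ hφ).trans (MulEquiv.prodMultiplicative _ _).symm)⟩
  obtain ⟨x, y, hxy, hu⟩ := Nat.card_eq_two_iff.1 hι
  have hall : ∀ i, i = x ∨ i = y := by
    intro i
    have : i ∈ ({x, y} : Set ι) := hu ▸ Set.mem_univ i
    simpa using this
  rcases le_total (e x) (e y) with h | h
  · exact main x y hxy hall h
  · exact main y x hxy.symm (fun i => (hall i).symm) h

lemma mem_sylow {G : Type*} [CommGroup G] (P : Sylow 2 G) (g : G) (k : ℕ) (hg : g ^ 2 ^ k = 1) :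
    g ∈ P := by
  have hz : IsPGroup 2 (Subgroup.zpowers g) := by
    rintro ⟨y, hy⟩
    obtain ⟨m, rfl⟩ := Subgroup.mem_zpowers_iff.1 hy
    refine ⟨k, Subtype.ext ?_⟩
    change (g ^ m) ^ 2 ^ k = 1
    rw [← zpow_natCast, ← zpow_mul, mul_comm, zpow_mul, zpow_natCast, hg, one_zpow]
  exact hz.le_sylow_of_normal P (Subgroup.mem_zpowers g)

lemma sylow_struct {G : Type*} [CommGroup G] [Finite G] (P : Sylow 2 G)
    (h4 : ∃ a b : G, a ^ 2 = 1 ∧ b ^ 2 = 1 ∧ a ≠ 1 ∧ b ≠ 1 ∧ a * b ≠ 1 ∧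
      ∀ x : G, x ^ 2 = 1 → x = 1 ∨ x = a ∨ x = b ∨ x = a * b)
    (g : G) (ℓ : ℕ) (hg : orderOf g = 2 ^ ℓ) :
    ∃ a b : ℕ, 1 ≤ a ∧ ℓ ≤ b ∧
      Nonempty ((P : Subgroup G) ≃* Multiplicative (ZMod (2 ^ a) × ZMod (2 ^ b))) := by
  classical
  have hgP : g ∈ (P : Subgroup G) := mem_sylow P g ℓ (hg ▸ pow_orderOf_eq_one g)
  refine pgroup_struct (P : Subgroup G) P.isPGroup' ?_ ⟨g, hgP⟩ ℓ ?_
  · obtain ⟨a, b, ha, hb, ha1, hb1, hab1, hall⟩ := h4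
    have hab : a ≠ b := by
      rintro rfl
      exact hab1 (by rw [← sq, ha])
    have e1 : Nat.card {x : (P : Subgroup G) // x ^ 2 = 1} = Nat.card {x : G // x ^ 2 = 1} := by
      refine Nat.card_congr ⟨fun x => ⟨x.1.1, by simpa using congrArg Subtype.val x.2⟩,
        fun x => ⟨⟨x.1, mem_sylow P x.1 1 (by simpa using x.2)⟩, Subtype.ext x.2⟩, ?_, ?_⟩
      · intro x; rfl
      · intro x; rfl
    rw [e1]
    have e2 : {x : G | x ^ 2 = 1} = (({1, a, b, a * b} : Finset G) : Set G) := by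
      ext x
      simp only [Set.mem_ofPred_eq, Finset.coe_insert, Finset.coe_singleton, Set.mem_insert_iff,
        Set.mem_singleton_iff]
      refine ⟨hall x, ?_⟩
      rintro (rfl | rfl | rfl | rfl)
      · simp
      · exact ha
      · exact hb
      · rw [mul_pow, ha, hb, one_mul]
    have e3 : Nat.card {x : G // x ^ 2 = 1} = ({x : G | x ^ 2 = 1}).ncard := rfl
    rw [e3, e2, Set.ncard_coe_finset]
    rw [Finset.card_insert_of_notMem, Finset.card_insert_of_notMem, Finset.card_insert_of_notMem,
      Finset.card_singleton]
    · simpa using ha1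
    · simp [hab, hb1]
    · simp [ha1.symm, hb1.symm, Ne.symm hab1]
  · rw [← hg, ← Subgroup.orderOf_coe]
end grp

section nf

lemma quad_norm {F : Type*} [CommRing F] {A : Type*} [CommRing A] [Algebra F A] (c : F) (s : A)
    (hs : s ^ 2 = - algebraMap F A c)
    (hinj : ∀ u v : F, algebraMap F A u + algebraMap F A v * s = 0 → u = 0 ∧ v = 0)
    (hsurj : ∀ x : A, ∃ u v : F, x = algebraMap F A u + algebraMap F A v * s) :
    ∃ f : QuadraticAlgebra F (-c) 0 ≃ₐ[F] A,
      (∀ u v : F, f ⟨u, v⟩ = algebraMap F A u + algebraMap F A v * s) := by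
  let φ : QuadraticAlgebra F (-c) 0 →ₐ[F] A := QuadraticAlgebra.lift ⟨s, by
    rw [← sq, hs]; simp [Algebra.smul_def]⟩
  have hφ : ∀ u v : F, φ ⟨u, v⟩ = algebraMap F A u + algebraMap F A v * s := by
    intro u v
    simp [φ, QuadraticAlgebra.lift, Algebra.smul_def]
  refine ⟨AlgEquiv.ofBijective φ ⟨?_, ?_⟩, hφ⟩
  · rw [injective_iff_map_eq_zero]
    rintro ⟨u, v⟩ h
    rw [hφ] at h
    obtain ⟨rfl, rfl⟩ := hinj u v h
    rfl
  · intro x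
    obtain ⟨u, v, rfl⟩ := hsurj x
    exact ⟨⟨u, v⟩, hφ u v⟩

lemma quad_norm_eq {F : Type*} [CommRing F] {A : Type*} [CommRing A] [Algebra F A] (c : F) (s : A)
    (f : QuadraticAlgebra F (-c) 0 ≃ₐ[F] A)
    (hf : ∀ u v : F, f ⟨u, v⟩ = algebraMap F A u + algebraMap F A v * s) (u v : F) :
    Algebra.norm F (algebraMap F A u + algebraMap F A v * s) = u ^ 2 + c * v ^ 2 := by
  rw [← hf, Algebra.norm_eq_of_algEquiv, Algebra.norm_apply]
  have := QuadraticAlgebra.det_toLinearMap_eq_norm (⟨u, v⟩ : QuadraticAlgebra F (-c) 0)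
  rw [QuadraticAlgebra.norm_def] at this
  refine Eq.trans ?_ (this.trans ?_)
  · congr 1
  · simp; ring

variable {K : Type*} [Field K] [NumberField K]

lemma rat_rep {d : ℤ} {α : K} (hα : α ^ 2 = -(d : K))
    (htop : IntermediateField.adjoin ℚ {α} = ⊤) (x : K) :
    ∃ u v : ℚ, x = algebraMap ℚ K u + algebraMap ℚ K v * α := by
  have hx : x ∈ Algebra.adjoin ℚ {α} := by
    rw [← IntermediateField.adjoin_simple_toSubalgebra_of_isAlgebraic
      (Algebra.IsAlgebraic.isAlgebraic α), htop]
    trivial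
  induction hx using Algebra.adjoin_induction with
  | mem x hx =>
    obtain rfl : x = α := hx
    exact ⟨0, 1, by simp⟩
  | algebraMap r => exact ⟨r, 0, by simp⟩
  | add x y _ _ hx hy =>
    obtain ⟨a, b, rfl⟩ := hx
    obtain ⟨a', b', rfl⟩ := hy
    exact ⟨a + a', b + b', by rw [map_add, map_add]; ring⟩
  | mul x y _ _ hx hy =>
    obtain ⟨a, b, rfl⟩ := hx
    obtain ⟨a', b', rfl⟩ := hy
    refine ⟨a * a' - d * b * b', a * b' + a' * b, ?_⟩
    simp only [map_sub, map_mul, map_add, map_intCast]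
    linear_combination (algebraMap ℚ K b) * (algebraMap ℚ K b') * hα

lemma rat_inj {d : ℤ} (hd : 0 < d) {α : K} (hα : α ^ 2 = -(d : K)) (u v : ℚ)
    (h : algebraMap ℚ K u + algebraMap ℚ K v * α = 0) : u = 0 ∧ v = 0 := by
  have h1 : algebraMap ℚ K (u ^ 2 + d * v ^ 2) = 0 := by
    simp only [map_add, map_mul, map_pow, map_intCast]
    linear_combination (algebraMap ℚ K u - algebraMap ℚ K v * α) * h + (algebraMap ℚ K v) ^ 2 * hα
  have h2 : u ^ 2 + d * v ^ 2 = 0 := (algebraMap ℚ K).injective (by rw [h1, map_zero])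
  have hd' : (0 : ℚ) < d := by exact_mod_cast hd
  have hu : u ^ 2 = 0 := by nlinarith [sq_nonneg u, mul_nonneg hd'.le (sq_nonneg v)]
  have hv : d * v ^ 2 = 0 := by nlinarith [sq_nonneg u, mul_nonneg hd'.le (sq_nonneg v)]
  refine ⟨by simpa using hu, ?_⟩
  rcases mul_eq_zero.1 hv with h | h
  · exact absurd h hd'.ne'
  · simpa using h

lemma rat_sq_int {d : ℤ} (hsf : Squarefree d) (c : ℚ) (k : ℤ) (h : d * c ^ 2 = k) :
    ∃ t : ℤ, c = t := by
  have hden : (c.den : ℚ) ≠ 0 := by exact_mod_cast c.den_nz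
  have h1 : d * c.num ^ 2 = k * (c.den : ℤ) ^ 2 := by
    have : (d : ℚ) * c.num ^ 2 = k * (c.den : ℚ) ^ 2 := by
      rw [← h]
      nth_rw 2 [← Rat.num_div_den c]
      field_simp
    exact_mod_cast this
  have hcop : IsCoprime ((c.den : ℤ) ^ 2) (c.num ^ 2) := by
    apply IsCoprime.pow
    rw [isCoprime_comm, Int.isCoprime_iff_gcd_eq_one]
    exact c.reduced
  have h2 : (c.den : ℤ) ^ 2 ∣ d := hcop.dvd_of_dvd_mul_right (h1 ▸ Dvd.intro_left _ rfl)
  rw [sq] at h2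
  have h3 := hsf _ h2
  have h4 : c.den = 1 := by
    have := Int.isUnit_iff_natAbs_eq.1 h3
    simpa using this
  exact ⟨c.num, (Rat.den_eq_one_iff _).1 h4 |>.symm⟩

lemma int_of_norm_trace {d : ℤ} (hsf : Squarefree d) (h4 : d % 4 = 1) (u v : ℚ) (m n : ℤ)
    (hm : 2 * u = m) (hn : u ^ 2 + d * v ^ 2 = n) : (∃ a : ℤ, u = a) ∧ ∃ b : ℤ, v = b := by
  obtain ⟨t, ht⟩ := rat_sq_int hsf (2 * v) (4 * n - m ^ 2) (by
    push_cast; rw [← hm, ← hn]; ring)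
  have h : m ^ 2 + d * t ^ 2 = 4 * n := by
    have : (m : ℚ) ^ 2 + d * t ^ 2 = 4 * n := by rw [← hm, ← ht, ← hn]; ring
    exact_mod_cast this
  have h2 : m % 2 = 0 ∧ t % 2 = 0 := by
    obtain ⟨k, rfl⟩ : ∃ k, d = 4 * k + 1 := ⟨d / 4, by omega⟩
    have h5 : (m ^ 2 + t ^ 2) % 4 = 0 := by
      have : m ^ 2 + t ^ 2 = 4 * (n - k * t ^ 2) := by linear_combination h
      omega
    rcases Int.emod_two_eq_zero_or_one m with hm | hm <;>
    rcases Int.emod_two_eq_zero_or_one t with ht | ht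
    · exact ⟨hm, ht⟩
    all_goals
      exfalso
      have e1 : m = 2 * (m / 2) + m % 2 := by omega
      have e2 : t = 2 * (t / 2) + t % 2 := by omega
      rw [hm] at e1
      rw [ht] at e2
      rw [e1, e2] at h5
      ring_nf at h5
      omega
  refine ⟨⟨m / 2, ?_⟩, ⟨t / 2, ?_⟩⟩
  · have : (m : ℚ) = 2 * ((m / 2 : ℤ) : ℚ) := by exact_mod_cast (by omega : m = 2 * (m / 2))
    linarith
  · have : (t : ℚ) = 2 * ((t / 2 : ℤ) : ℚ) := by exact_mod_cast (by omega : t = 2 * (t / 2))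
    linarith

lemma ring_of_integers {d : ℤ} (hd : 0 < d) (hsf : Squarefree d) (h4 : d % 4 = 1) {α : K}
    (hα : α ^ 2 = -(d : K)) (htop : IntermediateField.adjoin ℚ {α} = ⊤) :
    ∃ s : 𝓞 K, s ^ 2 = -(d : 𝓞 K) ∧ (∀ x : 𝓞 K, ∃ u v : ℤ, x = u + v * s) ∧
    (∀ u v : ℤ, (Ideal.absNorm (Ideal.span {(u + v * s : 𝓞 K)}) : ℤ) = u ^ 2 + d * v ^ 2) := by
  have hint : IsIntegral ℤ α := by
    refine IsIntegral.of_pow two_pos ?_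
    rw [hα]
    exact (isIntegral_algebraMap (R := ℤ) (x := d)).neg
  obtain ⟨s, hs⟩ : ∃ s : 𝓞 K, algebraMap (𝓞 K) K s = α := ⟨⟨α, hint⟩, rfl⟩
  have hs2 : s ^ 2 = -(d : 𝓞 K) := by
    apply RingOfIntegers.ext
    simp only [map_pow, map_neg, map_intCast]
    rw [hs, hα]
  have hrep : ∀ x : 𝓞 K, ∃ u v : ℤ, x = u + v * s := by
    intro x
    obtain ⟨f, hf⟩ := quad_norm (d : ℚ) α (by rw [hα]; simp) (rat_inj hd hα) (rat_rep hα htop)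
    have hN := quad_norm_eq (d : ℚ) α f hf
    obtain ⟨u, v, huv⟩ := rat_rep hα htop (algebraMap (𝓞 K) K x)
    have hi : ∀ y : 𝓞 K, ∃ n : ℤ, Algebra.norm ℚ (algebraMap (𝓞 K) K y) = n :=
      fun y => ⟨_, (Algebra.coe_norm_int y).symm⟩
    obtain ⟨n, hn⟩ := hi x
    obtain ⟨n', hn'⟩ := hi (x + 1)
    have hx1 : algebraMap (𝓞 K) K (x + 1) = algebraMap ℚ K (u + 1) + algebraMap ℚ K v * α := by
      rw [map_add, map_one, huv, map_add, map_one]; ring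
    rw [huv, hN] at hn
    rw [hx1, hN] at hn'
    obtain ⟨⟨a, ha⟩, ⟨b, hb⟩⟩ := int_of_norm_trace hsf h4 u v (n' - n - 1) n
      (by push_cast; rw [← hn, ← hn']; ring) hn
    refine ⟨a, b, ?_⟩
    apply RingOfIntegers.ext
    simp only [map_add, map_mul, map_intCast]
    refine huv.trans ?_
    rw [ha, hb, hs]
    simp
  refine ⟨s, hs2, hrep, ?_⟩
  have hinj : ∀ u v : ℤ, algebraMap ℤ (𝓞 K) u + algebraMap ℤ (𝓞 K) v * s = 0 → u = 0 ∧ v = 0 := by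
    intro u v h
    have h1 := congrArg (algebraMap (𝓞 K) K) h
    simp only [algebraMap_int_eq, eq_intCast, map_add, map_mul, map_intCast, map_zero] at h1
    rw [hs] at h1
    have := rat_inj hd hα u v (by simpa using h1)
    exact_mod_cast this
  obtain ⟨f, hf⟩ := quad_norm (d : ℤ) s (by rw [hs2]; simp) hinj (by simpa using hrep)
  have hN := quad_norm_eq (d : ℤ) s f hf
  intro u v
  rw [Ideal.absNorm_span_singleton]
  have := hN u v
  simp only [algebraMap_int_eq, eq_intCast] at this
  rw [this]
  exact Int.natAbs_of_nonneg (by positivity)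

lemma field_equiv {d : ℤ} (hd : 0 < d) {α : K} (hα : α ^ 2 = -(d : K))
    (htop : IntermediateField.adjoin ℚ {α} = ⊤)
    {K' : Type*} [Field K'] [NumberField K'] {α' : K'} (hα' : α' ^ 2 = -(d : K'))
    (htop' : IntermediateField.adjoin ℚ {α'} = ⊤) : Nonempty (K ≃+* K') := by
  obtain ⟨f, -⟩ := quad_norm (d : ℚ) α (by rw [hα]; simp) (rat_inj hd hα) (rat_rep hα htop)
  obtain ⟨f', -⟩ := quad_norm (d : ℚ) α' (by rw [hα']; simp) (rat_inj hd hα') (rat_rep hα' htop')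
  exact ⟨(f.symm.trans f').toRingEquiv⟩

lemma sylow_transfer {G H : Type*} [CommGroup G] [CommGroup H] [Finite G] [Finite H] (e : G ≃* H)
    (P : Sylow 2 G) (Q : Sylow 2 H) : Nonempty ((Q : Subgroup H) ≃* (P : Subgroup G)) := by
  have : Fact (Nat.Prime 2) := ⟨Nat.prime_two⟩
  let P' : Sylow 2 H := P.mapSurjective (f := e.toMonoidHom) e.surjective
  exact ⟨(Sylow.equiv Q P').trans (e.subgroupMap (P : Subgroup G)).symm⟩
end nf

end SylTwo

theorem sylow_two_class_group_of_type (ℓ : ℕ) (hℓ : 1 ≤ ℓ) (w : ℤ) (hw : Odd w)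
    (p₁ p₂ : ℕ) (hp₁ : p₁.Prime) (hp₂ : p₂.Prime) (hne : p₁ ≠ p₂)
    (h5₁ : 5 ≤ p₁) (h5₂ : 5 ≤ p₂)
    (hsum : (p₁ : ℤ) + p₂ = 2 * w ^ 2 ^ (ℓ - 1)) :
    ∃ a b : ℕ, 1 ≤ a ∧ ℓ ≤ b ∧
      twoClassGroupIso (p₁ * p₂) (Multiplicative (ZMod (2 ^ a) × ZMod (2 ^ b))) := by
  have hd : (0 : ℤ) < p₁ * p₂ := by positivity
  have hsf : Squarefree ((p₁ * p₂ : ℤ)) := by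
    have h : Squarefree (p₁ * p₂) := by
      rw [Nat.squarefree_mul ((Nat.coprime_primes hp₁ hp₂).2 hne)]
      exact ⟨hp₁.prime.squarefree, hp₂.prime.squarefree⟩
    have := Int.squarefree_natCast.2 h
    push_cast at this
    exact this
  have h4 : (p₁ * p₂ : ℤ) % 4 = 1 := by
    obtain ⟨m, hm⟩ : Odd (w ^ 2 ^ (ℓ - 1)) := hw.pow
    have ho : p₁ % 2 = 1 := hp₁.eq_two_or_odd.resolve_left (by omega)
    obtain ⟨t, ht⟩ : ∃ t : ℤ, (p₁ : ℤ) = 2 * t + 1 := ⟨p₁ / 2, by omega⟩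
    have h2 : (p₂ : ℤ) = 4 * m + 2 - (2 * t + 1) := by rw [← ht]; linarith
    have : (p₁ * p₂ : ℤ) = 4 * (2 * t * m + m - t * t) + 1 := by
      rw [h2, ht]; ring
    omega
  have hα' : ∀ (K : Type) [Field K] [NumberField K] (α : K), α ^ 2 = -((p₁ * p₂ : ℕ) : K) →
      α ^ 2 = -((p₁ * p₂ : ℤ) : K) := by
    intro K _ _ α h
    rw [h]; push_cast; rfl
  by_cases hex : ∃ (K : Type) (_ : Field K) (_ : NumberField K) (α : K),
      α ^ 2 = -((p₁ * p₂ : ℕ) : K) ∧ IntermediateField.adjoin ℚ {α} = ⊤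
  · obtain ⟨K, _, _, α, hα, htop⟩ := hex
    replace hα := hα' K α hα
    obtain ⟨s, hs, hrep, hA⟩ := SylTwo.ring_of_integers hd hsf h4 hα htop
    have htors := SylTwo.two_torsion hp₁ hp₂ hne h5₂ h5₁ h4 hs hrep hA
    obtain ⟨g, hg⟩ := SylTwo.exists_order hp₁ hp₂ hne h5₂ h5₁ hs hrep hA (ℓ - 1) w hw hsum
    rw [Nat.sub_add_cancel hℓ] at hg
    obtain ⟨P⟩ : Nonempty (Sylow 2 (ClassGroup (𝓞 K))) := inferInstance
    obtain ⟨a, b, ha, hb, ⟨f⟩⟩ := SylTwo.sylow_struct P htors g ℓ hg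
    refine ⟨a, b, ha, hb, ?_⟩
    intro K' _ _ α' hα₁ htop₁ Q
    obtain ⟨e⟩ := SylTwo.field_equiv hd hα htop (hα' K' α' hα₁) htop₁
    obtain ⟨h⟩ := SylTwo.sylow_transfer
      (ClassGroup.mulEquiv (RingOfIntegers.mapRingEquiv e)) P Q
    exact ⟨h.trans f⟩
  · refine ⟨1, ℓ, le_rfl, le_rfl, ?_⟩
    intro K _ _ α hα htop P
    exact absurd ⟨K, inferInstance, inferInstance, α, hα, htop⟩ hex
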